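/- arXiv:1706.07551 — 4 statements merged into one kernel-verified Lean document; each statement's English description precedes it below -/
import Mathlib

section
/- Let β ∈ (0,1) and let V : [0,∞) → ℝ be continuously differentiable. If the Caputo fractional derivative satisfies (D^β V)(t) ≤ 0 for all t ≥ 0, then V(t) ≤ V(0) for all t ≥ 0. -/
open MeasureTheory intervalIntegral

/-- Caputo fractional derivative of order `β` of a real-valued function `g`. -/
noncomputable def caputo (β : ℝ) (g : ℝ → ℝ) (t : ℝ) : ℝ :=
  (1 / Real.Gamma (1 - β)) * ∫ s in (0:ℝ)..t, (t - s) ^ (-β) * deriv g s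

/-!
If `V` exceeded `V 0` somewhere on `[0, t]`, it would attain its maximum over `[0, t]` at some
`T > 0` with `V T > V 0`. On `[0, T]` the kernel `(T - s) ^ (-β)` increases with `s` and `V - V T`
is nonpositive, so integrating by parts bounds the Caputo derivative at `T` below by
`T ^ (-β) * (V T - V 0) / Γ(1 - β) > 0`. The boundary term at the singularity `s = T` vanishes
because `V s - V T = O(T - s)` and `β < 1`.
-/

open Set Filter Topology Asymptotics

section WeightedIntegral

variable {w w' f f' : ℝ → ℝ} {a b c : ℝ}

theorem sub_le_integral_mul_deriv_of_nonneg_deriv (hab : a ≤ b)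
    (hw : ContinuousOn w (Icc a b)) (hww' : ∀ x ∈ Ioo a b, HasDerivAt w (w' x) x)
    (hw' : ∀ x ∈ Ioo a b, 0 ≤ w' x)
    (hf : ContinuousOn f (Icc a b)) (hff' : ∀ x ∈ Ioo a b, HasDerivAt f (f' x) x)
    (hf' : IntervalIntegrable f' volume a b) (hfc : ∀ x ∈ Ioo a b, f x ≤ c) :
    w b * (f b - c) - w a * (f a - c) ≤ ∫ x in a..b, w x * f' x := by
  rw [← uIcc_of_le hab] at hw hf
  have hIoo : Ioo a b = Ioo (min a b) (max a b) := by rw [min_eq_left hab, max_eq_right hab]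
  rw [hIoo] at hww' hff'
  have hw'_int : IntervalIntegrable w' volume a b :=
    intervalIntegrable_deriv_of_nonneg hw hww' (hIoo ▸ hw')
  have by_parts : ∫ x in a..b, w x * f' x =
      w b * (f b - c) - w a * (f a - c) - ∫ x in a..b, w' x * (f x - c) :=
    integral_mul_deriv_eq_deriv_mul_of_hasDerivAt hw (hf.sub continuousOn_const) hww'
      (fun x hx ↦ (hff' x hx).sub_const c) hw'_int hf'
  have integral_nonpos : ∫ x in a..b, w' x * (f x - c) ≤ 0 := by
    rw [integral_of_le hab, integral_Ioc_eq_integral_Ioo]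
    exact setIntegral_nonpos measurableSet_Ioo fun x hx ↦
      mul_nonpos_of_nonneg_of_nonpos (hw' x hx) (sub_nonpos.2 (hfc x hx))
  linarith

theorem mul_sub_le_integral_mul_deriv_of_tendsto_zero (hab : a < b)
    (hw : ContinuousOn w (Ico a b)) (hww' : ∀ x ∈ Ioo a b, HasDerivAt w (w' x) x)
    (hw' : ∀ x ∈ Ioo a b, 0 ≤ w' x)
    (hf : ContinuousOn f (Ico a b)) (hff' : ∀ x ∈ Ioo a b, HasDerivAt f (f' x) x)
    (hf' : IntervalIntegrable f' volume a b) (hfc : ∀ x ∈ Ioo a b, f x ≤ c)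
    (hwf' : IntervalIntegrable (fun x ↦ w x * f' x) volume a b)
    (hlim : Tendsto (fun x ↦ w x * (f x - c)) (𝓝[<] b) (𝓝 0)) :
    w a * (c - f a) ≤ ∫ x in a..b, w x * f' x := by
  have hprimitive : Tendsto (fun x ↦ ∫ s in a..x, w s * f' s) (𝓝[<] b)
      (𝓝 (∫ s in a..b, w s * f' s)) := by
    have := continuousOn_primitive_interval' hwf' left_mem_uIcc b right_mem_uIcc
    rw [uIcc_of_le hab.le] at this
    exact this.mono_left (nhdsWithin_le_of_mem (Icc_mem_nhdsLT hab))
  have hle : ∀ᶠ x in 𝓝[<] b,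
      w x * (f x - c) - w a * (f a - c) ≤ ∫ s in a..x, w s * f' s := by
    filter_upwards [Ioo_mem_nhdsLT hab] with x hx
    have hIcc : Icc a x ⊆ Ico a b := Icc_subset_Ico_right hx.2
    have hIoo : Ioo a x ⊆ Ioo a b := Ioo_subset_Ioo_right hx.2.le
    exact sub_le_integral_mul_deriv_of_nonneg_deriv hx.1.le (hw.mono hIcc)
      (fun y hy ↦ hww' y (hIoo hy)) (fun y hy ↦ hw' y (hIoo hy)) (hf.mono hIcc)
      (fun y hy ↦ hff' y (hIoo hy))
      (hf'.mono_set (uIcc_subset_uIcc_left (Icc_subset_uIcc ⟨hx.1.le, hx.2.le⟩)))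
      fun y hy ↦ hfc y (hIoo hy)
  have := le_of_tendsto_of_tendsto (hlim.sub_const _) hprimitive hle
  linarith

end WeightedIntegral

theorem tendsto_rpow_neg_mul_sub_of_differentiableWithinAt {f : ℝ → ℝ} {b β : ℝ} (hβ : β < 1)
    (hf : DifferentiableWithinAt ℝ f (Iio b) b) :
    Tendsto (fun x ↦ (b - x) ^ (-β) * (f x - f b)) (𝓝[<] b) (𝓝 0) := by
  have hsub : (fun x ↦ f x - f b) =O[𝓝[<] b] fun x ↦ b - x := by
    simpa only [neg_sub] using hf.isBigO_sub.neg_right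
  have hpow : (fun x ↦ (b - x) ^ (-β) * (b - x)) =ᶠ[𝓝[<] b] fun x ↦ (b - x) ^ (1 - β) := by
    filter_upwards [self_mem_nhdsWithin] with x hx
    rw [← Real.rpow_add_one (sub_pos.2 hx).ne', neg_add_eq_sub]
  have hzero : Tendsto (fun x ↦ (b - x) ^ (1 - β)) (𝓝[<] b) (𝓝 0) := by
    have hcont : Continuous fun x : ℝ ↦ (b - x) ^ (1 - β) :=
      (continuous_const.sub continuous_id).rpow_const fun _ ↦ Or.inr (sub_pos.2 hβ).le
    simpa [Real.zero_rpow (sub_pos.2 hβ).ne'] using (hcont.tendsto b).mono_left nhdsWithin_le_nhds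
  exact (((isBigO_refl _ _).mul hsub).trans_eventuallyEq hpow).trans_tendsto hzero

theorem intervalIntegrable_mul_deriv_of_contDiffOn {w f : ℝ → ℝ} {a b : ℝ}
    (hab : a < b) (hw : IntervalIntegrable w volume a b) (hf : ContDiffOn ℝ 1 f (Icc a b)) :
    IntervalIntegrable (fun x ↦ w x * deriv f x) volume a b := by
  have hcont : ContinuousOn (derivWithin f (Icc a b)) (uIcc a b) := by
    rw [uIcc_of_le hab.le]
    exact hf.continuousOn_derivWithin (uniqueDiffOn_Icc hab) le_rfl
  refine (hw.mul_continuousOn hcont).congr_uIoo fun x hx ↦ ?_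
  rw [uIoo_of_le hab.le] at hx
  simp only [derivWithin_of_mem_nhds (Icc_mem_nhds hx.1 hx.2)]

theorem intervalIntegrable_sub_rpow_neg {β : ℝ} (hβ : β < 1) (a b : ℝ) :
    IntervalIntegrable (fun s ↦ (b - s) ^ (-β)) volume a b := by
  simpa using (intervalIntegrable_rpow' (a := b - a) (b := 0) (neg_lt_neg hβ)).comp_sub_left b

theorem hasDerivAt_sub_rpow_neg (β : ℝ) {b x : ℝ} (hx : x < b) :
    HasDerivAt (fun s ↦ (b - s) ^ (-β)) (β * (b - x) ^ (-β - 1)) x :=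
  (((hasDerivAt_id x).const_sub b).rpow_const (Or.inl (sub_pos.2 hx).ne')).congr_deriv
    (by simp)

section Caputo

variable {β T : ℝ} {V : ℝ → ℝ}

theorem rpow_neg_mul_sub_le_integral_of_isMaxOn (hβ : β ∈ Ico 0 1) (hT : 0 < T)
    (hV : ContDiffOn ℝ 1 V (Icc 0 T)) (hmax : IsMaxOn V (Icc 0 T) T) :
    T ^ (-β) * (V T - V 0) ≤ ∫ s in (0:ℝ)..T, (T - s) ^ (-β) * deriv V s := by
  have hkernel (s : ℝ) (hs : s < T) := hasDerivAt_sub_rpow_neg β hs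
  have hdiff : DifferentiableOn ℝ V (Icc 0 T) := hV.differentiableOn one_ne_zero
  have hderiv (s : ℝ) (hs : s ∈ Ioo 0 T) : HasDerivAt V (deriv V s) s :=
    (hdiff.differentiableAt (Icc_mem_nhds hs.1 hs.2)).hasDerivAt
  have hderiv_int : IntervalIntegrable (deriv V) volume 0 T := by
    simpa using intervalIntegrable_mul_deriv_of_contDiffOn hT
      (intervalIntegrable_const (c := (1 : ℝ))) hV
  have hleft : DifferentiableWithinAt ℝ V (Iio T) T :=
    (hdiff T (right_mem_Icc.2 hT.le)).mono_of_mem_nhdsWithin (Icc_mem_nhdsLT hT)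
  simpa using mul_sub_le_integral_mul_deriv_of_tendsto_zero hT
    (fun s hs ↦ (hkernel s hs.2).continuousAt.continuousWithinAt)
    (fun s hs ↦ hkernel s hs.2)
    (fun s hs ↦ mul_nonneg hβ.1 (Real.rpow_nonneg (sub_pos.2 hs.2).le _))
    (hV.continuousOn.mono Ico_subset_Icc_self) hderiv hderiv_int
    (fun s hs ↦ hmax (Ioo_subset_Icc_self hs))
    (intervalIntegrable_mul_deriv_of_contDiffOn hT (intervalIntegrable_sub_rpow_neg hβ.2 0 T) hV)
    (tendsto_rpow_neg_mul_sub_of_differentiableWithinAt hβ.2 hleft)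

theorem caputo_pos_of_isMaxOn (hβ : β ∈ Ico 0 1) (hT : 0 < T)
    (hV : ContDiffOn ℝ 1 V (Icc 0 T)) (hmax : IsMaxOn V (Icc 0 T) T) (hlt : V 0 < V T) :
    0 < caputo β V T :=
  mul_pos (one_div_pos.2 (Real.Gamma_pos_of_pos (sub_pos.2 hβ.2))) <|
    (mul_pos (Real.rpow_pos_of_pos hT _) (sub_pos.2 hlt)).trans_le
      (rpow_neg_mul_sub_le_integral_of_isMaxOn hβ hT hV hmax)

end Caputo

theorem stmt_0_general {β T : ℝ} (hβ : β ∈ Ico 0 1) {V : ℝ → ℝ}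
    (hV : ContDiffOn ℝ 1 V (Icc 0 T)) (hD : ∀ t ∈ Ioc 0 T, caputo β V t ≤ 0) :
    ∀ t ∈ Icc 0 T, V t ≤ V 0 := by
  intro t ht
  obtain ⟨m, hm, hmax⟩ := isCompact_Icc.exists_isMaxOn ⟨t, ht⟩ hV.continuousOn
  refine (hmax ht).trans (not_lt.1 fun hlt ↦ ?_)
  have hm_pos : 0 < m := hm.1.lt_of_ne fun h ↦ hlt.ne (congrArg V h)
  have hsub : Icc 0 m ⊆ Icc 0 T := Icc_subset_Icc_right hm.2
  exact (hD m ⟨hm_pos, hm.2⟩).not_gt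
    (caputo_pos_of_isMaxOn hβ hm_pos (hV.mono hsub) (hmax.on_subset hsub) hlt)

/-- If the Caputo fractional derivative of order `β ∈ (0,1)` of a continuously
differentiable function `V` is nonpositive on `[0,∞)`, then `V t ≤ V 0` for all `t ≥ 0`. -/
theorem stmt_0 (β : ℝ) (hβ : β ∈ Set.Ioo (0:ℝ) 1) (V : ℝ → ℝ)
    (hV : ContDiff ℝ 1 V)
    (hD : ∀ t ≥ (0:ℝ), caputo β V t ≤ 0) :
    ∀ t ≥ (0:ℝ), V t ≤ V 0 :=
  fun t ht ↦ stmt_0_general (Ioo_subset_Ico_self hβ) hV.contDiffOn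
    (fun s hs ↦ hD s hs.1.le) t (right_mem_Icc.2 ht)
end

section
/- (Lyapunov stability from a nonpositive Caputo derivative, Proposition 2.1.) Let β ∈ (0,1), let x : [0,∞) → ℝⁿ be continuous, let V : [0,∞) → ℝ be continuously differentiable, and let α₁ > 0 and a > 0 satisfy α₁‖x(t)‖^a ≤ V(t) for all t ≥ 0. If the Caputo fractional derivative satisfies (D^β V)(t) ≤ 0 for all t ≥ 0, then ‖x(t)‖ ≤ (V(0)/α₁)^(1/a) for all t ≥ 0, where ‖·‖ is the Euclidean norm. -/
open MeasureTheory intervalIntegral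

/-!
Integrating by parts against `s ↦ V s - V t`, which vanishes at `t` fast enough to absorb the
singularity of the kernel, gives
`Γ(1 - β) (D^β V)(t) = t^(-β) (V t - V 0) + β ∫₀ᵗ (t - s)^(-β-1) (V t - V s) ds`.
If `V` attains its maximum over `[0, t]` at `t`, the last integral is nonnegative, so
`(D^β V)(t) ≤ 0` forces `V t ≤ V 0`. Applied at a maximum point of `V` over `[0, T]`, this shows
`V T ≤ V 0`, and the bound on `‖x T‖` follows.
-/

open Set

section AbelKernel

variable {β a b : ℝ} {f f' : ℝ → ℝ}

theorem continuousWithinAt_rpow_mul_sub_right (hβ : β < 1)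
    (hf : DifferentiableWithinAt ℝ f (Iic b) b) :
    ContinuousWithinAt (fun s ↦ (b - s) ^ (-β) * (f s - f b)) (Iic b) b := by
  have hf_bigO : (fun s ↦ f s - f b) =O[nhdsWithin b (Iic b)] fun s ↦ b - s :=
    hf.isBigO_sub.neg_right.congr_right fun _ ↦ neg_sub _ _
  have h_bigO : (fun s ↦ (b - s) ^ (-β) * (f s - f b))
      =O[nhdsWithin b (Iic b)] fun s ↦ (b - s) ^ (1 - β) := by
    refine ((Asymptotics.isBigO_refl (fun s ↦ (b - s) ^ (-β)) _).mul hf_bigO).congr' .rfl ?_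
    filter_upwards [self_mem_nhdsWithin] with s hs
    rw [← Real.rpow_add_one' (sub_nonneg.2 hs) (by linarith), neg_add_eq_sub]
  have h_cont : Continuous fun s : ℝ ↦ (b - s) ^ (1 - β) :=
    (continuous_const.sub continuous_id).rpow_const fun _ ↦ .inr (sub_pos.2 hβ).le
  have h_tendsto := h_cont.continuousWithinAt (s := Iic b) (x := b)
  simp only [ContinuousWithinAt, sub_self, Real.zero_rpow (sub_pos.2 hβ).ne'] at h_tendsto
  simpa only [ContinuousWithinAt, sub_self, mul_zero] using h_bigO.trans_tendsto h_tendsto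

theorem continuousOn_rpow_mul_sub_right (hβ : β < 1) (hf : ContinuousOn f (Icc a b))
    (hfb : DifferentiableWithinAt ℝ f (Iic b) b) :
    ContinuousOn (fun s ↦ (b - s) ^ (-β) * (f s - f b)) (Icc a b) := by
  intro s hs
  rcases hs.2.eq_or_lt with rfl | hsb
  · exact (continuousWithinAt_rpow_mul_sub_right hβ hfb).mono Icc_subset_Iic_self
  · have h_kernel : ContinuousAt (fun u ↦ (b - u) ^ (-β)) s :=
      (continuousAt_const.sub continuousAt_id).rpow_const (.inl (sub_pos.2 hsb).ne')
    exact h_kernel.continuousWithinAt.mul ((hf s hs).sub continuousWithinAt_const)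

theorem hasDerivAt_rpow_mul_sub_right {s d : ℝ} (hs : s < b) (hf : HasDerivAt f d s) :
    HasDerivAt (fun u ↦ (b - u) ^ (-β) * (f u - f b))
      (β * (b - s) ^ (-β - 1) * (f s - f b) + (b - s) ^ (-β) * d) s := by
  have h_kernel : HasDerivAt (fun u ↦ (b - u) ^ (-β)) (-1 * -β * (b - s) ^ (-β - 1)) s :=
    ((hasDerivAt_id s).const_sub b).rpow_const (.inl (sub_pos.2 hs).ne')
  exact (h_kernel.mul (hf.sub_const (f b))).congr_deriv (by ring)

theorem rpow_mul_sub_le_integral_of_isMaxOn (hab : a ≤ b) (hβ : β ∈ Ico 0 1)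
    (hf : ContinuousOn f (Icc a b)) (hfb : DifferentiableWithinAt ℝ f (Iic b) b)
    (hf' : ∀ s ∈ Ioo a b, HasDerivAt f (f' s) s)
    (hint : IntervalIntegrable (fun s ↦ (b - s) ^ (-β) * f' s) volume a b)
    (hmax : IsMaxOn f (Icc a b) b) :
    (b - a) ^ (-β) * (f b - f a) ≤ ∫ s in a..b, (b - s) ^ (-β) * f' s := by
  have h_remainder_nonpos :
      ∀ s ∈ Ioo a b, β * (b - s) ^ (-β - 1) * (f s - f b) ≤ 0 := fun s hs ↦
    mul_nonpos_of_nonneg_of_nonpos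
      (mul_nonneg hβ.1 (Real.rpow_nonneg (sub_nonneg.2 hs.2.le) _))
      (sub_nonpos.2 (hmax (Ioo_subset_Icc_self hs)))
  have h_ftc := sub_le_integral_of_hasDeriv_right_of_le hab
    (continuousOn_rpow_mul_sub_right hβ.2 hf hfb)
    (fun s hs ↦ (hasDerivAt_rpow_mul_sub_right hs.2 (hf' s hs)).hasDerivWithinAt)
    ((intervalIntegrable_iff_integrableOn_Icc_of_le hab).1 hint)
    (fun s hs ↦ add_le_of_nonpos_left (h_remainder_nonpos s hs))
  calc (b - a) ^ (-β) * (f b - f a)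
      = (b - b) ^ (-β) * (f b - f b) - (b - a) ^ (-β) * (f a - f b) := by ring
    _ ≤ ∫ s in a..b, (b - s) ^ (-β) * f' s := h_ftc

theorem intervalIntegrable_rpow_mul_deriv (hβ : β < 1) (hab : a < b)
    (hf : ContDiffOn ℝ 1 f (Icc a b)) :
    IntervalIntegrable (fun s ↦ (b - s) ^ (-β) * deriv f s) volume a b := by
  have h_kernel : IntervalIntegrable (fun s ↦ (b - s) ^ (-β)) volume a b := by
    simpa only [sub_sub_cancel, sub_zero] using
      (intervalIntegrable_rpow' (a := b - a) (b := 0) (neg_lt_neg hβ)).comp_sub_left b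
  have h_derivWithin : ContinuousOn (derivWithin f (Icc a b)) (uIcc a b) :=
    uIcc_of_le hab.le ▸ hf.continuousOn_derivWithin (uniqueDiffOn_Icc hab) le_rfl
  refine (h_kernel.mul_continuousOn h_derivWithin).congr_uIoo fun s hs ↦ ?_
  rw [uIoo_of_le hab.le] at hs
  simp only [derivWithin_of_mem_nhds (Icc_mem_nhds hs.1 hs.2)]

end AbelKernel

section Caputo

variable {β : ℝ} {V : ℝ → ℝ}

theorem le_caputo_of_isMaxOn {t : ℝ} (hβ : β ∈ Ico 0 1) (ht : 0 < t)
    (hV : ContDiffOn ℝ 1 V (Icc 0 t)) (hmax : IsMaxOn V (Icc 0 t) t) :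
    1 / Real.Gamma (1 - β) * (t ^ (-β) * (V t - V 0)) ≤ caputo β V t := by
  have h_diff : DifferentiableOn ℝ V (Icc 0 t) := hV.differentiableOn one_ne_zero
  have h_left : DifferentiableWithinAt ℝ V (Iic t) t :=
    (h_diff t (right_mem_Icc.2 ht.le)).mono_of_mem_nhdsWithin (Icc_mem_nhdsLE ht)
  have h_deriv : ∀ s ∈ Ioo 0 t, HasDerivAt V (deriv V s) s := fun s hs ↦
    (h_diff.differentiableAt (Icc_mem_nhds hs.1 hs.2)).hasDerivAt
  have h_integral := rpow_mul_sub_le_integral_of_isMaxOn ht.le hβ hV.continuousOn h_left h_deriv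
    (intervalIntegrable_rpow_mul_deriv hβ.2 ht hV) hmax
  rw [sub_zero] at h_integral
  exact mul_le_mul_of_nonneg_left h_integral
    (one_div_nonneg.2 (Real.Gamma_pos_of_pos (sub_pos.2 hβ.2)).le)

theorem le_apply_zero_of_isMaxOn_of_caputo_nonpos {t : ℝ} (hβ : β ∈ Ico 0 1) (ht : 0 < t)
    (hV : ContDiffOn ℝ 1 V (Icc 0 t)) (hmax : IsMaxOn V (Icc 0 t) t) (hD : caputo β V t ≤ 0) :
    V t ≤ V 0 := by
  have h_nonpos := (le_caputo_of_isMaxOn hβ ht hV hmax).trans hD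
  have h_Gamma : 0 < 1 / Real.Gamma (1 - β) :=
    one_div_pos.2 (Real.Gamma_pos_of_pos (sub_pos.2 hβ.2))
  exact sub_nonpos.1 <| nonpos_of_mul_nonpos_right
    (nonpos_of_mul_nonpos_right h_nonpos h_Gamma) (Real.rpow_pos_of_pos ht _)

theorem le_apply_zero_of_caputo_nonpos {T : ℝ} (hβ : β ∈ Ico 0 1) (hT : 0 ≤ T)
    (hV : ContDiffOn ℝ 1 V (Icc 0 T)) (hD : ∀ t ∈ Ioc 0 T, caputo β V t ≤ 0) :
    V T ≤ V 0 := by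
  obtain ⟨t, ht, hmax⟩ := isCompact_Icc.exists_isMaxOn (nonempty_Icc.2 hT) hV.continuousOn
  have hTt : V T ≤ V t := hmax (right_mem_Icc.2 hT)
  rcases ht.1.eq_or_lt with rfl | ht_pos
  · exact hTt
  · have h_subset : Icc 0 t ⊆ Icc 0 T := Icc_subset_Icc_right ht.2
    exact hTt.trans <| le_apply_zero_of_isMaxOn_of_caputo_nonpos hβ ht_pos (hV.mono h_subset)
      (hmax.on_subset h_subset) (hD t ⟨ht_pos, ht.2⟩)

end Caputo

theorem stmt_1_general {E : Type*} [SeminormedAddGroup E] {β : ℝ} (hβ : β ∈ Ico 0 1)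
    {x : ℝ → E} {V : ℝ → ℝ} (hV : ContDiffOn ℝ 1 V (Ici 0))
    {α₁ a : ℝ} (hα₁ : 0 < α₁) (ha : 0 < a)
    (hbound : ∀ t ≥ (0 : ℝ), α₁ * ‖x t‖ ^ a ≤ V t) (hD : ∀ t ≥ (0 : ℝ), caputo β V t ≤ 0) :
    ∀ t ≥ (0 : ℝ), ‖x t‖ ≤ (V 0 / α₁) ^ (1 / a) := by
  intro t ht
  have hV_le : V t ≤ V 0 :=
    le_apply_zero_of_caputo_nonpos hβ ht (hV.mono Icc_subset_Ici_self) fun s hs ↦ hD s hs.1.le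
  have h_pow : ‖x t‖ ^ a ≤ V 0 / α₁ := (le_div_iff₀' hα₁).2 ((hbound t ht).trans hV_le)
  have h_nonneg : 0 ≤ V 0 / α₁ := (Real.rpow_nonneg (norm_nonneg _) a).trans h_pow
  rw [one_div]
  exact (Real.le_rpow_inv_iff_of_pos (norm_nonneg _) h_nonneg ha).2 h_pow

/-- Lyapunov stability from a nonpositive Caputo derivative (Proposition 2.1):
if `α₁‖x t‖^a ≤ V t` and the Caputo derivative of `V` is nonpositive on `[0,∞)`,
then `‖x t‖ ≤ (V 0 / α₁)^(1/a)` for all `t ≥ 0`. -/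
theorem stmt_1 {n : ℕ} (β : ℝ) (hβ : β ∈ Set.Ioo (0:ℝ) 1)
    (x : ℝ → EuclideanSpace ℝ (Fin n)) (hx : Continuous x)
    (V : ℝ → ℝ) (hV : ContDiff ℝ 1 V)
    (α₁ a : ℝ) (hα₁ : 0 < α₁) (ha : 0 < a)
    (hbound : ∀ t ≥ (0:ℝ), α₁ * ‖x t‖ ^ a ≤ V t)
    (hD : ∀ t ≥ (0:ℝ), caputo β V t ≤ 0) :
    ∀ t ≥ (0:ℝ), ‖x t‖ ≤ (V 0 / α₁) ^ (1 / a) :=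
  stmt_1_general (Ioo_subset_Ico_self hβ) hV.contDiffOn hα₁ ha hbound hD
end

section
/- (QSR dissipativity implies L₂ stability, Theorem 3.3.) Let β ∈ (0,1), q > 0, r ≥ 0, s ≥ 0, let u : [0,∞) → ℝᵖ and y : [0,∞) → ℝᵐ be continuous, and let V : [0,∞) → ℝ be continuously differentiable with V(t) ≥ 0 for all t ≥ 0. Assume the Caputo fractional derivative satisfies (D^β V)(t) ≤ −q‖y(t)‖² + s‖u(t)‖‖y(t)‖ + r‖u(t)‖² for all t ≥ 0, where ‖·‖ is the Euclidean norm. Then for every τ ≥ 0: (q/2)∫₀^τ ‖y(t)‖² dt ≤ (s²/(2q) + r)∫₀^τ ‖u(t)‖² dt + (τ^(1−β)/((1−β)Γ(1−β)))·V(0). -/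
open MeasureTheory intervalIntegral

/-!
Integrate the dissipation inequality over `[0, τ]`. By Fubini, the integral of the Volterra
convolution of `z ↦ z ^ (-β)` with `V'` is the integral of `z ^ (-β) * ∫ x in 0..τ - z, V' x`, and
the fundamental theorem of calculus turns the inner integral into `V (τ - z) - V 0 ≥ -V 0`. So
the integral of `caputo β V` is at least `-V 0 / Γ(1 - β)` times the integral of `z ^ (-β)`. Young's
inequality absorbs the cross term of the supply rate.
-/

section VolterraConvolution

open Set
open scoped Convolution

variable {E F G : Type*} [NormedAddCommGroup E] [NormedSpace ℝ E] [NormedAddCommGroup F]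
  [NormedSpace ℝ F] [NormedAddCommGroup G] [NormedSpace ℝ G]
  {f : ℝ → E} {g : ℝ → F} {t x τ : ℝ}

theorem convolution_indicator_Ioc_eq (L : E →L[ℝ] F →L[ℝ] G) (ht : t ∈ Ioc 0 τ) :
    ((Ioc 0 τ).indicator f ⋆[L] (Ioc 0 τ).indicator g) t = ∫ x in 0..t, L (f x) (g (t - x)) := by
  have hsupport : ∀ x ∉ Ioo 0 t,
      L ((Ioc 0 τ).indicator f x) ((Ioc 0 τ).indicator g (t - x)) = 0 := by
    intro x hx
    by_cases hx0 : 0 < x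
    · have hxt : t - x ∉ Ioc 0 τ := fun h ↦ hx ⟨hx0, sub_pos.1 h.1⟩
      rw [indicator_of_notMem hxt, map_zero]
    · rw [indicator_of_notMem fun h ↦ hx0 h.1, map_zero, zero_apply]
  rw [convolution, ← setIntegral_eq_integral_of_forall_compl_eq_zero hsupport,
    integral_of_le ht.1.le, integral_Ioc_eq_integral_Ioo]
  refine setIntegral_congr_fun measurableSet_Ioo fun x hx ↦ ?_
  have hxτ : x ∈ Ioc 0 τ := ⟨hx.1, hx.2.le.trans ht.2⟩
  have htxτ : t - x ∈ Ioc 0 τ := ⟨sub_pos.2 hx.2, by linarith [hx.1, ht.2]⟩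
  simp only [indicator_of_mem hxτ, indicator_of_mem htxτ]

theorem integral_indicator_Ioc_comp_sub_right (hx : x ∈ Icc 0 τ) :
    ∫ t in 0..τ, (Ioc 0 τ).indicator g (t - x) = ∫ t in 0..τ - x, g t := by
  have hinter : Ioc (0 - x) (τ - x) ∩ Ioc 0 τ = Ioc 0 (τ - x) := by
    rw [Ioc_inter_Ioc, sup_eq_right.2 (by linarith [hx.1]), inf_eq_left.2 (by linarith [hx.1])]
  rw [intervalIntegral.integral_comp_sub_right, integral_of_le (by linarith [hx.1, hx.2]),
    setIntegral_indicator measurableSet_Ioc, hinter, integral_of_le (sub_nonneg.2 hx.2)]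

theorem intervalIntegrable_volterraConvolution (L : E →L[ℝ] F →L[ℝ] G) (hτ : 0 ≤ τ)
    (hf : IntervalIntegrable f volume 0 τ) (hg : IntervalIntegrable g volume 0 τ) :
    IntervalIntegrable (fun t ↦ ∫ x in 0..t, L (f x) (g (t - x))) volume 0 τ := by
  rw [intervalIntegrable_iff_integrableOn_Ioc_of_le hτ] at hf hg ⊢
  have hconv := (hf.integrable_indicator measurableSet_Ioc).integrable_convolution L
    (hg.integrable_indicator measurableSet_Ioc)
  exact hconv.integrableOn.congr_fun (fun t ht ↦ convolution_indicator_Ioc_eq L ht)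
    measurableSet_Ioc

theorem integral_volterraConvolution [CompleteSpace F] [CompleteSpace G]
    (L : E →L[ℝ] F →L[ℝ] G) (hτ : 0 ≤ τ)
    (hf : IntervalIntegrable f volume 0 τ) (hg : IntervalIntegrable g volume 0 τ) :
    ∫ t in 0..τ, ∫ x in 0..t, L (f x) (g (t - x)) =
      ∫ x in 0..τ, L (f x) (∫ t in 0..τ - x, g t) := by
  rw [intervalIntegrable_iff_integrableOn_Ioc_of_le hτ] at hf hg
  set f₀ := (Ioc 0 τ).indicator f
  set g₀ := (Ioc 0 τ).indicator g
  have hf₀ : Integrable f₀ := hf.integrable_indicator measurableSet_Ioc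
  have hg₀ : Integrable g₀ := hg.integrable_indicator measurableSet_Ioc
  have hint : Integrable (fun p : ℝ × ℝ ↦ L (f₀ p.2) (g₀ (p.1 - p.2)))
      ((volume.restrict (Ioc 0 τ)).prod volume) :=
    (hf₀.convolution_integrand L hg₀).mono_measure
      (Measure.prod_mono Measure.restrict_le_self le_rfl)
  have hpull (x : ℝ) : ∫ t in Ioc 0 τ, L (f₀ x) (g₀ (t - x)) =
      L (f₀ x) (∫ t in Ioc 0 τ, g₀ (t - x)) :=
    (L (f₀ x)).integral_comp_comm (hg₀.comp_sub_right x).integrableOn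
  calc ∫ t in 0..τ, ∫ x in 0..t, L (f x) (g (t - x))
      = ∫ t in Ioc 0 τ, ∫ x, L (f₀ x) (g₀ (t - x)) := by
        rw [integral_of_le hτ]
        exact setIntegral_congr_fun measurableSet_Ioc
          fun t ht ↦ (convolution_indicator_Ioc_eq L ht).symm
    _ = ∫ x, L (f₀ x) (∫ t in Ioc 0 τ, g₀ (t - x)) := by
        rw [integral_integral_swap hint]
        simp only [hpull]
    _ = ∫ x in Ioc 0 τ, L (f₀ x) (∫ t in Ioc 0 τ, g₀ (t - x)) := by
        refine (setIntegral_eq_integral_of_forall_compl_eq_zero fun x hx ↦ ?_).symm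
        simp only [f₀, indicator_of_notMem hx, map_zero, zero_apply]
    _ = ∫ x in 0..τ, L (f x) (∫ t in 0..τ - x, g t) := by
        rw [integral_of_le hτ]
        refine setIntegral_congr_fun measurableSet_Ioc fun x hx ↦ ?_
        simp only [f₀, g₀, indicator_of_mem hx, ← integral_of_le hτ,
          integral_indicator_Ioc_comp_sub_right (Ioc_subset_Icc_self hx)]

end VolterraConvolution

section Caputo

open Set

variable {β τ c : ℝ} {g : ℝ → ℝ}

theorem caputo_eq_integral_comp_sub (β : ℝ) (g : ℝ → ℝ) (t : ℝ) :
    caputo β g t = 1 / Real.Gamma (1 - β) * ∫ z in 0..t, z ^ (-β) * deriv g (t - z) := by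
  have h := intervalIntegral.integral_comp_sub_left (a := 0) (b := t)
    (fun z ↦ z ^ (-β) * deriv g (t - z)) t
  simp only [sub_sub_cancel, sub_self, sub_zero] at h
  rw [caputo, h]

theorem intervalIntegrable_caputo (hβ : β < 1) (hτ : 0 ≤ τ)
    (hg' : IntervalIntegrable (deriv g) volume 0 τ) :
    IntervalIntegrable (caputo β g) volume 0 τ := by
  rw [funext (caputo_eq_integral_comp_sub β g)]
  exact (intervalIntegrable_volterraConvolution (ContinuousLinearMap.mul ℝ ℝ) hτ
    (intervalIntegrable_rpow' (by linarith)) hg').const_mul _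

theorem integral_caputo (hβ : β < 1) (hτ : 0 ≤ τ) (hg : ContinuousOn g (Icc 0 τ))
    (hdiff : ∀ t ∈ Ioo 0 τ, DifferentiableAt ℝ g t)
    (hg' : IntervalIntegrable (deriv g) volume 0 τ) :
    ∫ t in 0..τ, caputo β g t =
      1 / Real.Gamma (1 - β) * ∫ z in 0..τ, z ^ (-β) * (g (τ - z) - g 0) := by
  have hfubini := integral_volterraConvolution (ContinuousLinearMap.mul ℝ ℝ) hτ
    (intervalIntegrable_rpow' (r := -β) (by linarith)) hg'
  simp only [ContinuousLinearMap.mul_apply'] at hfubini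
  simp only [caputo_eq_integral_comp_sub, intervalIntegral.integral_const_mul, hfubini]
  congr 1
  refine intervalIntegral.integral_congr fun z hz ↦ ?_
  rw [uIcc_of_le hτ] at hz
  have hle : τ - z ≤ τ := sub_le_self τ hz.1
  have hFTC : ∫ t in 0..τ - z, deriv g t = g (τ - z) - g 0 :=
    integral_eq_sub_of_hasDerivAt_of_le (sub_nonneg.2 hz.2)
      (hg.mono (Icc_subset_Icc_right hle))
      (fun t ht ↦ (hdiff t (Ioo_subset_Ioo_right hle ht)).hasDerivAt)
      (hg'.mono_set (uIcc_subset_uIcc_left (by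
        rw [uIcc_of_le hτ]; exact ⟨sub_nonneg.2 hz.2, hle⟩)))
  simp only [hFTC]

theorem le_integral_caputo_of_le (hβ : β < 1) (hτ : 0 ≤ τ) (hg : ContinuousOn g (Icc 0 τ))
    (hdiff : ∀ t ∈ Ioo 0 τ, DifferentiableAt ℝ g t)
    (hg' : IntervalIntegrable (deriv g) volume 0 τ) (hc : ∀ t ∈ Icc 0 τ, c ≤ g t) :
    τ ^ (1 - β) / ((1 - β) * Real.Gamma (1 - β)) * (c - g 0) ≤ ∫ t in 0..τ, caputo β g t := by
  have hGamma : 0 < Real.Gamma (1 - β) := Real.Gamma_pos_of_pos (by linarith)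
  have hkernel : IntervalIntegrable (fun z : ℝ ↦ z ^ (-β)) volume 0 τ :=
    intervalIntegrable_rpow' (by linarith)
  have hreflect : MapsTo (τ - ·) (Icc 0 τ) (Icc 0 τ) :=
    fun z hz ↦ ⟨sub_nonneg.2 hz.2, sub_le_self τ hz.1⟩
  have hincrement : ContinuousOn (fun z ↦ g (τ - z) - g 0) (uIcc 0 τ) := by
    rw [uIcc_of_le hτ]
    exact (hg.comp (by fun_prop) hreflect).sub continuousOn_const
  calc τ ^ (1 - β) / ((1 - β) * Real.Gamma (1 - β)) * (c - g 0)
      = 1 / Real.Gamma (1 - β) * ∫ z in 0..τ, z ^ (-β) * (c - g 0) := by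
        rw [intervalIntegral.integral_mul_const, integral_rpow (Or.inl (by linarith)),
          neg_add_eq_sub, Real.zero_rpow (by linarith), sub_zero]
        field_simp
    _ ≤ 1 / Real.Gamma (1 - β) * ∫ z in 0..τ, z ^ (-β) * (g (τ - z) - g 0) := by
        gcongr
        refine intervalIntegral.integral_mono_on hτ (hkernel.mul_const _)
          (hkernel.mul_continuousOn hincrement) fun z hz ↦ ?_
        exact mul_le_mul_of_nonneg_left (sub_le_sub_right (hc _ (hreflect hz)) _)
          (Real.rpow_nonneg hz.1 _)
    _ = ∫ t in 0..τ, caputo β g t := (integral_caputo hβ hτ hg hdiff hg').symm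

end Caputo

theorem qsr_supply_rate_le {q : ℝ} (hq : 0 < q) (r s a b : ℝ) :
    -q * b ^ 2 + s * a * b + r * a ^ 2 ≤
      (s ^ 2 / (2 * q) + r) * a ^ 2 - q / 2 * b ^ 2 := by
  have hsquare : (s ^ 2 / (2 * q) + r) * a ^ 2 - q / 2 * b ^ 2
      - (-q * b ^ 2 + s * a * b + r * a ^ 2) = (s * a - q * b) ^ 2 / (2 * q) := by
    field_simp
    ring
  rw [← sub_nonneg, hsquare]
  positivity

theorem stmt_3_general {E F : Type*} [SeminormedAddCommGroup E] [SeminormedAddCommGroup F]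
    {β q r s τ : ℝ} (hβ : β < 1) (hq : 0 < q) (hτ : 0 ≤ τ) {u : ℝ → E} {y : ℝ → F}
    (hu : IntervalIntegrable (fun t ↦ ‖u t‖ ^ 2) volume 0 τ)
    (hy : IntervalIntegrable (fun t ↦ ‖y t‖ ^ 2) volume 0 τ)
    {V : ℝ → ℝ} (hV : ContinuousOn V (Set.Icc 0 τ))
    (hdiff : ∀ t ∈ Set.Ioo 0 τ, DifferentiableAt ℝ V t)
    (hV' : IntervalIntegrable (deriv V) volume 0 τ) (hVpos : ∀ t ∈ Set.Icc 0 τ, 0 ≤ V t)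
    (hdiss : ∀ᵐ t ∂volume.restrict (Set.Icc 0 τ),
      caputo β V t ≤ -q * ‖y t‖ ^ 2 + s * ‖u t‖ * ‖y t‖ + r * ‖u t‖ ^ 2) :
    (q / 2) * ∫ t in 0..τ, ‖y t‖ ^ 2 ≤
      (s ^ 2 / (2 * q) + r) * (∫ t in 0..τ, ‖u t‖ ^ 2)
        + (τ ^ (1 - β) / ((1 - β) * Real.Gamma (1 - β))) * V 0 := by
  have hlower := le_integral_caputo_of_le hβ hτ hV hdiff hV' hVpos
  have hupper : ∫ t in 0..τ, caputo β V t ≤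
      ∫ t in 0..τ, ((s ^ 2 / (2 * q) + r) * ‖u t‖ ^ 2 - q / 2 * ‖y t‖ ^ 2) :=
    intervalIntegral.integral_mono_ae_restrict hτ (intervalIntegrable_caputo hβ hτ hV')
      ((hu.const_mul _).sub (hy.const_mul _))
      (hdiss.mono fun t ht ↦ ht.trans (qsr_supply_rate_le hq r s ‖u t‖ ‖y t‖))
  rw [intervalIntegral.integral_sub (hu.const_mul _) (hy.const_mul _),
    intervalIntegral.integral_const_mul, intervalIntegral.integral_const_mul] at hupper
  linarith

/-- QSR dissipativity implies L₂ stability (Theorem 3.3). -/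
theorem stmt_3 {p m : ℕ} (β q r s : ℝ) (hβ : β ∈ Set.Ioo (0:ℝ) 1)
    (hq : 0 < q) (hr : 0 ≤ r) (hs : 0 ≤ s)
    (u : ℝ → EuclideanSpace ℝ (Fin p)) (y : ℝ → EuclideanSpace ℝ (Fin m))
    (hu : Continuous u) (hy : Continuous y)
    (V : ℝ → ℝ) (hV : ContDiff ℝ 1 V) (hVpos : ∀ t ≥ (0:ℝ), 0 ≤ V t)
    (hdiss : ∀ t ≥ (0:ℝ),
      caputo β V t ≤ -q * ‖y t‖ ^ 2 + s * ‖u t‖ * ‖y t‖ + r * ‖u t‖ ^ 2) :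
    ∀ τ ≥ (0:ℝ),
      (q / 2) * ∫ t in (0:ℝ)..τ, ‖y t‖ ^ 2 ≤
        (s ^ 2 / (2 * q) + r) * (∫ t in (0:ℝ)..τ, ‖u t‖ ^ 2)
          + (τ ^ (1 - β) / ((1 - β) * Real.Gamma (1 - β))) * V 0 :=
  fun τ hτ ↦ stmt_3_general hβ.2 hq hτ ((hu.norm.pow 2).intervalIntegrable 0 τ)
    ((hy.norm.pow 2).intervalIntegrable 0 τ) hV.continuous.continuousOn
    (fun t _ ↦ hV.differentiable one_ne_zero t) (hV.continuous_deriv_one.intervalIntegrable 0 τ)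
    (fun t ht ↦ hVpos t ht.1) (ae_restrict_of_forall_mem measurableSet_Icc fun t ht ↦ hdiss t ht.1)
end

section
/- (Passivity of a fractional order mass–spring–damper system, Example 2.) Let β ∈ (0,1), a > 0, k > 0, let x₁, x₂ : [0,∞) → ℝ be continuously differentiable, and let u : [0,∞) → ℝ be continuous, such that the Caputo fractional derivatives satisfy (D^β x₁)(t) = x₂(t) and (D^β x₂)(t) = −a·x₁(t) − k·x₂(t) + u(t) for all t ≥ 0. Then the storage function V(t) = (1/2)·a·x₁(t)² + (1/2)·x₂(t)² satisfies the passivity inequality (D^β V)(t) ≤ u(t)·x₂(t) for all t ≥ 0. -/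
open MeasureTheory intervalIntegral

/-!
If `x` is minimal on `[0, t]` at the endpoint `t`, then `(D^β x)(t) ≤ 0`: integrate
`(t - s) ^ (-β)` against the derivative of `x - x t ≥ 0` by parts. The kernel is increasing in `s`,
so every term has a favourable sign, and the boundary term at the singular endpoint vanishes
because `x s - x t = O(t - s)` and `β < 1`. Applied to
`x ^ 2 - 2 * x t * x = (x - x t) ^ 2 - x t ^ 2`, this gives `D^β (x ^ 2) ≤ 2 x D^β x`; in the sum
`a x₁ D^β x₁ + x₂ D^β x₂` the cross terms `± a x₁ x₂` cancel, leaving `u x₂ - k x₂ ^ 2`.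
-/

section

open Set Filter Topology

variable {β r t c : ℝ} {f x y : ℝ → ℝ}

theorem intervalIntegrable_const_sub_rpow_mul {a : ℝ} (hr : -1 < r)
    (hf : ContinuousOn f (uIcc a t)) :
    IntervalIntegrable (fun s => (t - s) ^ r * f s) volume a t := by
  have h_rpow : IntervalIntegrable (fun s : ℝ => (t - s) ^ r) volume a t := by
    simpa using (intervalIntegrable_rpow' (a := t - a) (b := 0) hr).comp_sub_left t
  exact h_rpow.mul_continuousOn hf

theorem intervalIntegrable_const_sub_rpow_mul_deriv (hr : -1 < r) (ht : 0 ≤ t)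
    (hx : ContDiffOn ℝ 1 x (Icc 0 t)) :
    IntervalIntegrable (fun s => (t - s) ^ r * deriv x s) volume 0 t := by
  rcases ht.eq_or_lt with rfl | ht
  · exact IntervalIntegrable.refl
  have h_cont : ContinuousOn (derivWithin x (Icc 0 t)) (uIcc 0 t) :=
    uIcc_of_le ht.le ▸ hx.continuousOn_derivWithin (uniqueDiffOn_Icc ht) le_rfl
  refine (intervalIntegrable_const_sub_rpow_mul hr h_cont).congr_uIoo fun s hs => ?_
  rw [uIoo_of_le ht.le] at hs
  simp only [derivWithin_of_mem_nhds (Icc_mem_nhds hs.1 hs.2)]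

theorem caputo_const_mul : caputo β (fun s => c * x s) t = c * caputo β x t := by
  simp only [caputo, deriv_const_mul_field, mul_left_comm _ c, intervalIntegral.integral_const_mul]

theorem caputo_add (hβ : β < 1) (ht : 0 ≤ t)
    (hx : ContDiffOn ℝ 1 x (Icc 0 t)) (hy : ContDiffOn ℝ 1 y (Icc 0 t)) :
    caputo β (fun s => x s + y s) t = caputo β x t + caputo β y t := by
  simp only [caputo]
  rw [← mul_add, ← integral_add
    (intervalIntegrable_const_sub_rpow_mul_deriv (neg_lt_neg hβ) ht hx)
    (intervalIntegrable_const_sub_rpow_mul_deriv (neg_lt_neg hβ) ht hy)]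
  congr 1
  refine integral_congr_Ioo_of_le ht fun s hs => ?_
  have h_nhds : Icc 0 t ∈ 𝓝 s := Icc_mem_nhds hs.1 hs.2
  have hxs : DifferentiableAt ℝ x s := (hx.contDiffAt h_nhds).differentiableAt one_ne_zero
  have hys : DifferentiableAt ℝ y s := (hy.contDiffAt h_nhds).differentiableAt one_ne_zero
  simp only [deriv_fun_add hxs hys, mul_add]

theorem tendsto_const_sub_rpow_mul_sub (hr : -1 < r)
    (hx : DifferentiableWithinAt ℝ x (Iio t) t) :
    Tendsto (fun s => (t - s) ^ r * (x s - x t)) (𝓝[<] t) (𝓝 0) := by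
  have h_rpow : Tendsto (fun s => (t - s) ^ (r + 1)) (𝓝[<] t) (𝓝 0) := by
    have h_cont : Continuous fun s => (t - s) ^ (r + 1) :=
      (continuous_const.sub continuous_id).rpow_const fun _ => Or.inr (by linarith)
    have h_tendsto := h_cont.tendsto t
    rw [sub_self, Real.zero_rpow (by linarith)] at h_tendsto
    exact h_tendsto.mono_left nhdsWithin_le_nhds
  have h_slope := (hasDerivWithinAt_iff_tendsto_slope' self_notMem_Iio).1 hx.hasDerivWithinAt
  have h_mul := (h_rpow.mul h_slope).neg
  rw [zero_mul, neg_zero] at h_mul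
  refine h_mul.congr' ?_
  filter_upwards [self_mem_nhdsWithin] with s hs
  have h_pos : 0 < t - s := sub_pos.2 hs
  have h_ne : s - t ≠ 0 := (sub_neg.2 hs).ne
  rw [slope_def_field, Real.rpow_add_one h_pos.ne']
  field_simp
  ring

theorem continuousOn_const_sub_rpow_mul_sub (hr : -1 < r) (ht : 0 < t)
    (hx : ContinuousOn x (Icc 0 t)) (hxt : DifferentiableWithinAt ℝ x (Iio t) t) :
    ContinuousOn (fun s => (t - s) ^ r * (x s - x t)) (Icc 0 t) := by
  intro s hs
  rcases hs.2.eq_or_lt with rfl | hst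
  · have h_left : ContinuousWithinAt (fun τ => (s - τ) ^ r * (x τ - x s)) (Iio s) s := by
      simpa only [ContinuousWithinAt, sub_self, mul_zero] using
        tendsto_const_sub_rpow_mul_sub hr hxt
    exact (continuousWithinAt_Iio_iff_Iic.1 h_left).mono Icc_subset_Iic_self
  · have h_rpow : ContinuousAt (fun τ => (t - τ) ^ r) s :=
      (continuousAt_const.sub continuousAt_id).rpow_const (Or.inl (sub_pos.2 hst).ne')
    exact h_rpow.continuousWithinAt.mul ((hx s hs).sub continuousWithinAt_const)

theorem integral_mul_deriv_le_sub {a b : ℝ} {κ κ' h h' : ℝ → ℝ} (hab : a ≤ b)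
    (h_cont : ContinuousOn (fun s => κ s * h s) (Icc a b))
    (hκ : ∀ s ∈ Ioo a b, HasDerivAt κ (κ' s) s) (hh : ∀ s ∈ Ioo a b, HasDerivAt h (h' s) s)
    (h_int : IntervalIntegrable (fun s => κ s * h' s) volume a b)
    (h_nonneg : ∀ s ∈ Ioo a b, 0 ≤ κ' s * h s) :
    ∫ s in a..b, κ s * h' s ≤ κ b * h b - κ a * h a :=
  integral_le_sub_of_hasDeriv_right_of_le hab h_cont
    (fun s hs => ((hκ s hs).mul (hh s hs)).hasDerivWithinAt)
    ((intervalIntegrable_iff_integrableOn_Icc_of_le hab).1 h_int)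
    (fun s hs => le_add_of_nonneg_left (h_nonneg s hs))

theorem caputo_nonpos_of_isMinOn (hβ : β ∈ Ico (0 : ℝ) 1) (ht : 0 ≤ t)
    (hx : ContDiffOn ℝ 1 x (Icc 0 t)) (h_min : IsMinOn x (Icc 0 t) t) :
    caputo β x t ≤ 0 := by
  rcases ht.eq_or_lt with rfl | ht
  · simp only [caputo, integral_same, mul_zero, le_refl]
  have hr : -1 < -β := neg_lt_neg hβ.2
  have h_gap : ∀ s ∈ Icc 0 t, 0 ≤ x s - x t := fun s hs => sub_nonneg.2 (h_min hs)
  have h_left : DifferentiableWithinAt ℝ x (Iio t) t :=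
    ((hx.differentiableOn one_ne_zero) t (right_mem_Icc.2 ht.le)).mono_of_mem_nhdsWithin
      (Icc_mem_nhdsLT ht)
  have h_kernel : ∀ s ∈ Ioo 0 t,
      HasDerivAt (fun τ => (t - τ) ^ (-β)) (β * (t - s) ^ (-β - 1)) s := by
    intro s hs
    simpa using ((hasDerivAt_id s).const_sub t).rpow_const (p := -β)
      (Or.inl (sub_pos.2 hs.2).ne')
  have h_deriv : ∀ s ∈ Ioo 0 t, HasDerivAt (fun τ => x τ - x t) (deriv x s) s := fun s hs =>
    ((hx.contDiffAt (Icc_mem_nhds hs.1 hs.2)).differentiableAt one_ne_zero).hasDerivAt.sub_const _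
  have h_integral : ∫ s in (0 : ℝ)..t, (t - s) ^ (-β) * deriv x s ≤ 0 := by
    calc ∫ s in (0 : ℝ)..t, (t - s) ^ (-β) * deriv x s
        ≤ (t - t) ^ (-β) * (x t - x t) - (t - 0) ^ (-β) * (x 0 - x t) :=
          integral_mul_deriv_le_sub ht.le
            (continuousOn_const_sub_rpow_mul_sub hr ht hx.continuousOn h_left) h_kernel h_deriv
            (intervalIntegrable_const_sub_rpow_mul_deriv hr ht.le hx) fun s hs =>
              mul_nonneg (mul_nonneg hβ.1 (Real.rpow_nonneg (sub_nonneg.2 hs.2.le) _))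
                (h_gap s (Ioo_subset_Icc_self hs))
      _ = -(t ^ (-β) * (x 0 - x t)) := by ring_nf
      _ ≤ 0 := neg_nonpos.2 <|
          mul_nonneg (Real.rpow_nonneg ht.le _) (h_gap 0 (left_mem_Icc.2 ht.le))
  exact mul_nonpos_of_nonneg_of_nonpos
    (one_div_nonneg.2 (Real.Gamma_pos_of_pos (sub_pos.2 hβ.2)).le) h_integral

theorem caputo_sq_le (hβ : β ∈ Ico (0 : ℝ) 1) (ht : 0 ≤ t) (hx : ContDiffOn ℝ 1 x (Icc 0 t)) :
    caputo β (fun s => x s ^ 2) t ≤ 2 * x t * caputo β x t := by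
  have h_min : IsMinOn (fun s => x s ^ 2 + -(2 * x t) * x s) (Icc 0 t) t :=
    isMinOn_iff.2 fun s _ => by nlinarith [sq_nonneg (x s - x t)]
  have h_nonpos := caputo_nonpos_of_isMinOn hβ ht
    ((hx.pow 2).add (contDiffOn_const.mul hx)) h_min
  rw [caputo_add hβ.2 ht (hx.pow 2) (contDiffOn_const.mul hx), caputo_const_mul] at h_nonpos
  linarith

theorem stmt_17_general {a k : ℝ} {x₁ x₂ u : ℝ → ℝ} (hβ : β ∈ Ico (0 : ℝ) 1) (ha : 0 ≤ a)
    (hk : 0 ≤ k) (ht : 0 ≤ t)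
    (hx₁ : ContDiffOn ℝ 1 x₁ (Icc 0 t)) (hx₂ : ContDiffOn ℝ 1 x₂ (Icc 0 t))
    (hdyn₁ : caputo β x₁ t = x₂ t) (hdyn₂ : caputo β x₂ t = -a * x₁ t - k * x₂ t + u t) :
    caputo β (fun s => (1 / 2) * a * x₁ s ^ 2 + (1 / 2) * x₂ s ^ 2) t ≤ u t * x₂ t := by
  have h_sq₁ : caputo β (fun s => x₁ s ^ 2) t ≤ 2 * x₁ t * x₂ t :=
    hdyn₁ ▸ caputo_sq_le hβ ht hx₁
  have h_sq₂ : caputo β (fun s => x₂ s ^ 2) t ≤ 2 * x₂ t * (-a * x₁ t - k * x₂ t + u t) :=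
    hdyn₂ ▸ caputo_sq_le hβ ht hx₂
  calc caputo β (fun s => (1 / 2) * a * x₁ s ^ 2 + (1 / 2) * x₂ s ^ 2) t
      = (1 / 2) * a * caputo β (fun s => x₁ s ^ 2) t
          + (1 / 2) * caputo β (fun s => x₂ s ^ 2) t := by
        rw [caputo_add hβ.2 ht (contDiffOn_const.mul (hx₁.pow 2))
          (contDiffOn_const.mul (hx₂.pow 2)), caputo_const_mul, caputo_const_mul]
    _ ≤ (1 / 2) * a * (2 * x₁ t * x₂ t)
          + (1 / 2) * (2 * x₂ t * (-a * x₁ t - k * x₂ t + u t)) := by gcongr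
    _ = u t * x₂ t - k * x₂ t ^ 2 := by ring
    _ ≤ u t * x₂ t := sub_le_self _ (by positivity)

end

/-- Passivity of a fractional order mass–spring–damper system (Example 2):
if `D^β x₁ = x₂` and `D^β x₂ = −a·x₁ − k·x₂ + u`, then the storage function
`V = (1/2)a·x₁² + (1/2)x₂²` satisfies `(D^β V)(t) ≤ u(t)·x₂(t)` for all `t ≥ 0`. -/
theorem stmt_17 (β a k : ℝ) (hβ : β ∈ Set.Ioo (0:ℝ) 1) (ha : 0 < a) (hk : 0 < k)
    (x₁ x₂ : ℝ → ℝ) (hx₁ : ContDiff ℝ 1 x₁) (hx₂ : ContDiff ℝ 1 x₂)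
    (u : ℝ → ℝ) (hu : Continuous u)
    (hdyn₁ : ∀ t ≥ (0:ℝ), caputo β x₁ t = x₂ t)
    (hdyn₂ : ∀ t ≥ (0:ℝ), caputo β x₂ t = -a * x₁ t - k * x₂ t + u t) :
    ∀ t ≥ (0:ℝ),
      caputo β (fun s => (1 / 2) * a * x₁ s ^ 2 + (1 / 2) * x₂ s ^ 2) t ≤
        u t * x₂ t :=
  fun t ht => stmt_17_general (Set.Ioo_subset_Ico_self hβ) ha.le hk.le ht
    hx₁.contDiffOn hx₂.contDiffOn (hdyn₁ t ht) (hdyn₂ t ht)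
end
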